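/- The group GL₃(V) acts transitively on the family of all proper ordered quadrangles of 𝒢(V): for any two proper ordered quadrangles (P₁,P₂,P₃,P₄) and (Q₁,Q₂,Q₃,Q₄) there exists M ∈ GL₃(V) with Pᵢ^M = Qᵢ for i = 1,2,3,4. Moreover, any M ∈ GL₃(V) fixing each point of some proper ordered quadrangle is a scalar matrix k·I with k ∈ V*. -/

import Mathlib

/-! Context: `K` a field, `V` a commutative, associative, unital 2-dimensional `K`-algebra in
which every element is a product of two elements; `V₀ = K·r ∪ K·s` is the set of non-units.
Points and lines of the geometry `𝒢(V)` are represented by triples in `V × V × V` with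
trivial annihilator, up to multiplication by a unit. -/

/-- The triple `p` has trivial annihilator (so `V*p` is a point/line of `𝒢(V)`). -/
def TrivAnn {V : Type} [CommRing V] (p : V × V × V) : Prop :=
  ∀ v : V, v * p.1 = 0 → v * p.2.1 = 0 → v * p.2.2 = 0 → v = 0

/-- The point (represented by) `p` is incident with the line (represented by) `L`. -/
def Incid {V : Type} [CommRing V] (p L : V × V × V) : Prop :=
  L.1 * p.1 + L.2.1 * p.2.1 + L.2.2 * p.2.2 = 0

/-- Two points (or two lines) are neighboring. -/
def Nbr {V : Type} [CommRing V] (p q : V × V × V) : Prop :=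
  ∃ k l : V, (k, l) ≠ ((0 : V), (0 : V)) ∧
    (k * p.1, k * p.2.1, k * p.2.2) = (l * q.1, l * q.2.1, l * q.2.2)

/-- The point `p` and the line `L` are neighboring. -/
def NbrPL {V : Type} [CommRing V] (p L : V × V × V) : Prop :=
  ¬ IsUnit (L.1 * p.1 + L.2.1 * p.2.1 + L.2.2 * p.2.2)

/-- `p` and `q` represent the same point (resp. line) of `𝒢(V)`. -/
def SameCls {V : Type} [CommRing V] (p q : V × V × V) : Prop :=
  ∃ u : V, IsUnit u ∧ (u * p.1, u * p.2.1, u * p.2.2) = q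

/-- The standing hypotheses on the algebra `V` over `K`: it is `2`-dimensional, every element
is a product of two elements, and the set of non-units is `K·r ∪ K·s`. -/
def GoodAlg (K : Type) [Field K] (V : Type) [CommRing V] [Algebra K V] (r s : V) : Prop :=
  Module.finrank K V = 2 ∧ (∀ v : V, ∃ a b : V, v = a * b) ∧
    (∀ v : V, ¬ IsUnit v ↔ ((∃ k : K, v = k • r) ∨ (∃ k : K, v = k • s)))

/-- A proper ordered triangle: three pairwise non-neighboring points such that the three
(unique) joining lines are pairwise non-neighboring. -/
def ProperTri {V : Type} [CommRing V] (P₁ P₂ P₃ : V × V × V) : Prop :=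
  ¬ Nbr P₁ P₂ ∧ ¬ Nbr P₂ P₃ ∧ ¬ Nbr P₃ P₁ ∧
  ∃ L₁₂ L₂₃ L₃₁ : V × V × V,
    TrivAnn L₁₂ ∧ TrivAnn L₂₃ ∧ TrivAnn L₃₁ ∧
    Incid P₁ L₁₂ ∧ Incid P₂ L₁₂ ∧ Incid P₂ L₂₃ ∧ Incid P₃ L₂₃ ∧
    Incid P₃ L₃₁ ∧ Incid P₁ L₃₁ ∧
    ¬ Nbr L₁₂ L₂₃ ∧ ¬ Nbr L₂₃ L₃₁ ∧ ¬ Nbr L₃₁ L₁₂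

/-- A proper ordered quadrangle: every ordered subtriple is a proper ordered triangle. -/
def ProperQuad {V : Type} [CommRing V] (P₁ P₂ P₃ P₄ : V × V × V) : Prop :=
  ∀ i j k : Fin 4, i ≠ j → i ≠ k → j ≠ k →
    ProperTri (![P₁, P₂, P₃, P₄] i) (![P₁, P₂, P₃, P₄] j) (![P₁, P₂, P₃, P₄] k)

/-- The action of a 3×3 matrix on (representatives of) points: row vector times matrix. -/
def actP {V : Type} [CommRing V] (M : Matrix (Fin 3) (Fin 3) V) (p : V × V × V) : V × V × V :=
  (Matrix.vecMul ![p.1, p.2.1, p.2.2] M 0,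
   Matrix.vecMul ![p.1, p.2.1, p.2.2] M 1,
   Matrix.vecMul ![p.1, p.2.1, p.2.2] M 2)

/-- The corresponding action on (representatives of) lines: `(a,b,c) ↦ (a,b,c)·(M⁻¹)ᵗ`. -/
noncomputable def actL {V : Type} [CommRing V] (M : Matrix (Fin 3) (Fin 3) V) (L : V × V × V) : V × V × V :=
  actP (M⁻¹).transpose L

/-!
Two points are non-neighboring exactly when their representatives are linearly independent over `V`,
and then no nonzero scalar annihilates their cross product. A line through both of them is parallel
to this cross product, so the determinant of a proper triangle is regular: a scalar killing it would
make two sides parallel after multiplication by that scalar. This holds over every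
commutative ring; as soon as regular elements are units, the first three points of a proper
quadrangle are a basis of `V³` in which the fourth has, by Cramer's rule, unit coordinates.
Rescaling the basis vectors by these coordinates gives the classical normal form of a projective
frame, determined up to one common unit.
-/

open Matrix
open scoped nonZeroDivisors

section CrossProduct

variable {R : Type*} [CommRing R] {x y z a b : Fin 3 → R} {c : R}

theorem cross_cross_eq_zero (hx : x ⬝ᵥ a = 0) (hy : y ⬝ᵥ a = 0) : x ⨯₃ y ⨯₃ a = 0 := by
  rw [cross_cross_eq_smul_sub_smul, hx, hy, zero_smul, zero_smul, sub_zero]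

theorem triple_smul_eq_dotProduct_smul_cross (hx : x ⬝ᵥ a = 0) (hy : y ⬝ᵥ a = 0)
    (z : Fin 3 → R) :
    (z ⬝ᵥ x ⨯₃ y) • a = (z ⬝ᵥ a) • x ⨯₃ y := by
  have h := cross_cross_eq_smul_sub_smul (x ⨯₃ y) a z
  rw [cross_cross_eq_zero hx hy, map_zero, LinearMap.zero_apply] at h
  rw [dotProduct_comm z, dotProduct_comm z, sub_eq_zero.mp h.symm]

theorem eq_zero_of_smul_cross_eq_zero (h : LinearIndependent R ![x, y]) (hc : c • x ⨯₃ y = 0) :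
    c = 0 := by
  have hxy (w : Fin 3 → R) : (-(c * y ⬝ᵥ w)) • x + (c * x ⬝ᵥ w) • y = 0 := by
    calc (-(c * y ⬝ᵥ w)) • x + (c * x ⬝ᵥ w) • y
        = (c • x ⨯₃ y) ⨯₃ w := by
          rw [map_smul, LinearMap.smul_apply, cross_cross_eq_smul_sub_smul]
          module
      _ = 0 := by rw [hc, map_zero, LinearMap.zero_apply]
  have hcx : c • x = 0 := dotProduct_eq_zero _ fun w ↦ by
    rw [smul_dotProduct, smul_eq_mul, (LinearIndependent.pair_iff.mp h _ _ (hxy w)).2]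
  exact (LinearIndependent.pair_iff.mp h c 0 (by rw [hcx, zero_smul, add_zero])).1

theorem cross_eq_zero_of_dotProduct_eq_zero (h : LinearIndependent R ![x, y])
    (hxa : x ⬝ᵥ a = 0) (hya : y ⬝ᵥ a = 0) (hxb : x ⬝ᵥ b = 0) (hyb : y ⬝ᵥ b = 0) :
    a ⨯₃ b = 0 := by
  have hab (z : Fin 3 → R) : (z ⬝ᵥ x ⨯₃ y) • a ⨯₃ b = 0 := by
    rw [← LinearMap.smul_apply, ← map_smul, triple_smul_eq_dotProduct_smul_cross hxa hya, map_smul,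
      LinearMap.smul_apply, cross_cross_eq_zero hxb hyb, smul_zero]
  refine funext fun i ↦ eq_zero_of_smul_cross_eq_zero h (dotProduct_eq_zero _ fun z ↦ ?_)
  have hi := congrFun (hab z) i
  rwa [Pi.smul_apply, smul_eq_mul, mul_comm, dotProduct_comm, ← smul_eq_mul,
    ← smul_dotProduct] at hi

theorem det_mem_nonZeroDivisors_of_linearIndependent (hxy : LinearIndependent R ![x, y])
    (hyz : LinearIndependent R ![y, z]) (hab : LinearIndependent R ![a, b])
    (hxa : x ⬝ᵥ a = 0) (hya : y ⬝ᵥ a = 0) (hyb : y ⬝ᵥ b = 0) (hzb : z ⬝ᵥ b = 0) :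
    det ![x, y, z] ∈ R⁰ := by
  rw [← triple_product_eq_det, mem_nonZeroDivisors_iff_right]
  intro c hc
  have hcb : x ⬝ᵥ c • b = 0 := by
    refine eq_zero_of_smul_cross_eq_zero hyz ?_
    rw [dotProduct_smul, smul_assoc, ← triple_smul_eq_dotProduct_smul_cross hyb hzb, smul_smul, hc,
      zero_smul]
  have hycb : y ⬝ᵥ c • b = 0 := by rw [dotProduct_smul, hyb, smul_zero]
  refine eq_zero_of_smul_cross_eq_zero hab ?_
  rw [← map_smul, cross_eq_zero_of_dotProduct_eq_zero hxy hxa hya hcb hycb]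

end CrossProduct

section ProjectiveFrame

variable {n R : Type*} [Fintype n] [DecidableEq n] [CommRing R] {A B M : Matrix n n R}
  {b c : n → R}

/-- The rows of `A` together with `b` form a projective frame: `card n + 1` vectors in general
position. General position is encoded by the maximal minors being nonzerodivisors rather than units,
so that the notion is meaningful over every commutative ring. -/
def IsProjectiveFrame (A : Matrix n n R) (b : n → R) : Prop :=
  A.det ∈ R⁰ ∧ ∀ i, (A.updateRow i b).det ∈ R⁰

namespace IsProjectiveFrame

theorem eq_smul_one (h : IsProjectiveFrame A b) {k : n → R} {l : R}
    (hA : ∀ i, A i ᵥ* M = k i • A i) (hb : b ᵥ* M = l • b) : M = l • 1 := by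
  have hAM : A * M = diagonal k * A := by
    ext i j
    rw [mul_apply_eq_vecMul, hA, diagonal_mul, Pi.smul_apply, smul_eq_mul]
  have hcoord : (Aᵀ.cramer b) ᵥ* A = A.det • b := by
    rw [← mulVec_transpose, mulVec_cramer, det_transpose]
  have hk : (Aᵀ.cramer b) ᵥ* diagonal k = l • Aᵀ.cramer b := by
    refine sub_eq_zero.mp (eq_zero_of_det_mem_nonZeroDivisors_of_vecMul_eq_zero h.1 ?_)
    rw [sub_vecMul, sub_eq_zero]
    calc (Aᵀ.cramer b ᵥ* diagonal k) ᵥ* A = (Aᵀ.cramer b ᵥ* A) ᵥ* M := by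
          rw [vecMul_vecMul, ← hAM, vecMul_vecMul]
      _ = (l • Aᵀ.cramer b) ᵥ* A := by
          rw [hcoord, smul_vecMul, hb, smul_vecMul, hcoord, smul_comm]
  have hkl (i : n) : k i = l := by
    refine mul_cancel_left_mem_nonZeroDivisors (h.2 i) |>.mp ?_
    simpa only [vecMul_diagonal, cramer_transpose_apply, Pi.smul_apply, smul_eq_mul, mul_comm l]
      using congrFun hk i
  refine ext_of_mulVec_single fun j ↦ mulVec_injective_of_det_mem_nonZeroDivisors h.1 ?_
  have hl : A * M = A * l • 1 := by
    rw [hAM, funext hkl, Matrix.mul_smul, Matrix.mul_one, smul_eq_diagonal_mul]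
  rw [mulVec_mulVec, mulVec_mulVec, hl]

theorem isUnit_vecMul_inv (hR : R⁰ ≤ IsUnit.submonoid R) (h : IsProjectiveFrame A b) (i : n) :
    IsUnit ((b ᵥ* A⁻¹) i) := by
  have hi : A.det * (b ᵥ* A⁻¹) i = (A.updateRow i b).det := by
    rw [← cramer_transpose_apply, ← det_smul_inv_vecMul_eq_cramer_transpose A b (hR h.1),
      Pi.smul_apply, smul_eq_mul]
  exact isUnit_of_mul_isUnit_right (hi ▸ hR (h.2 i))

theorem exists_vecMul_eq (hR : R⁰ ≤ IsUnit.submonoid R) (hA : IsProjectiveFrame A b)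
    (hB : IsProjectiveFrame B c) :
    ∃ M : Matrix n n R, IsUnit M.det ∧ (∀ i, ∃ u : Rˣ, u • (A i ᵥ* M) = B i) ∧ b ᵥ* M = c := by
  choose x hx using hA.isUnit_vecMul_inv hR
  choose y hy using hB.isUnit_vecMul_inv hR
  let D : Matrix n n R := diagonal fun i ↦ ((x i)⁻¹ * y i : Rˣ)
  have hAM : A * (A⁻¹ * (D * B)) = D * B := mul_nonsing_inv_cancel_left A _ (hR hA.1)
  refine ⟨A⁻¹ * (D * B), ?_, fun i ↦ ⟨(y i)⁻¹ * x i, ?_⟩, ?_⟩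
  · rw [det_mul, det_mul, det_diagonal, ← Units.coe_prod]
    exact (isUnit_nonsing_inv_det A (hR hA.1)).mul ((Units.isUnit _).mul (hR hB.1))
  · have hi : A i ᵥ* (A⁻¹ * (D * B)) = ((x i)⁻¹ * y i) • B i := by
      ext j
      rw [← mul_apply_eq_vecMul, hAM, diagonal_mul]
      rfl
    rw [hi, smul_smul, mul_assoc, mul_inv_cancel_left, inv_mul_cancel, one_smul]
  · have hD : (b ᵥ* A⁻¹) ᵥ* D = c ᵥ* B⁻¹ := by
      ext i
      rw [vecMul_diagonal, ← hx, ← hy, ← Units.val_mul, mul_inv_cancel_left]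
    rw [← vecMul_vecMul, ← vecMul_vecMul, hD, vecMul_vecMul, nonsing_inv_mul B (hR hB.1),
      vecMul_one]

end IsProjectiveFrame

end ProjectiveFrame

section Geometry

variable {V : Type} [CommRing V] {p q r L : V × V × V} {P Q : Fin 4 → V × V × V}
  {M : Matrix (Fin 3) (Fin 3) V}

/-- The triple `p` as a vector indexed by `Fin 3`, the form in which cross products, linear
independence and matrices are available. -/
def toVec (p : V × V × V) : Fin 3 → V := ![p.1, p.2.1, p.2.2]

theorem linearIndependent_toVec_of_not_nbr (h : ¬ Nbr p q) :
    LinearIndependent V ![toVec p, toVec q] := by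
  refine LinearIndependent.pair_iff.mpr fun k l hkl ↦ ?_
  rw [add_eq_zero_iff_eq_neg, ← neg_smul] at hkl
  by_contra hne
  refine h ⟨k, -l, fun h0 ↦ hne ?_, Prod.ext (congrFun hkl 0)
    (Prod.ext (congrFun hkl 1) (congrFun hkl 2))⟩
  rwa [Prod.mk_inj, neg_eq_zero] at h0

theorem Incid.toVec_dotProduct (h : Incid p L) : toVec p ⬝ᵥ toVec L = 0 := by
  rw [dotProduct_comm, vec3_dotProduct]
  exact h

theorem toVec_actP (M : Matrix (Fin 3) (Fin 3) V) (p : V × V × V) :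
    toVec (actP M p) = toVec p ᵥ* M := by
  funext j
  fin_cases j <;> rfl

theorem sameCls_iff_exists_units_smul : SameCls p q ↔ ∃ u : Vˣ, u • toVec p = toVec q := by
  constructor
  · rintro ⟨_, ⟨u, rfl⟩, rfl⟩
    exact ⟨u, funext fun j ↦ by fin_cases j <;> rfl⟩
  · rintro ⟨u, hu⟩
    exact ⟨u, u.isUnit, Prod.ext (congrFun hu 0) (Prod.ext (congrFun hu 1) (congrFun hu 2))⟩

theorem ProperTri.det_mem_nonZeroDivisors (h : ProperTri p q r) :
    det ![toVec p, toVec q, toVec r] ∈ V⁰ := by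
  obtain ⟨hpq, hqr, -, L, M, N, -, -, -, hpL, hqL, hqM, hrM, -, -, hLM, -, -⟩ := h
  exact det_mem_nonZeroDivisors_of_linearIndependent (linearIndependent_toVec_of_not_nbr hpq)
    (linearIndependent_toVec_of_not_nbr hqr) (linearIndependent_toVec_of_not_nbr hLM)
    hpL.toVec_dotProduct hqL.toVec_dotProduct hqM.toVec_dotProduct hrM.toVec_dotProduct

theorem ProperQuad.isProjectiveFrame (h : ProperQuad (P 0) (P 1) (P 2) (P 3)) :
    IsProjectiveFrame (fun i : Fin 3 ↦ toVec (P i.castSucc)) (toVec (P 3)) := by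
  have hdet {f : Fin 3 → Fin 4} (hf : f.Injective) : det (fun i ↦ toVec (P (f i))) ∈ V⁰ := by
    have hP : ![P 0, P 1, P 2, P 3] = P := FinVec.etaExpand_eq P
    have hrows :
        (fun i ↦ toVec (P (f i))) = ![toVec (P (f 0)), toVec (P (f 1)), toVec (P (f 2))] :=
      (FinVec.etaExpand_eq _).symm
    have htri := h (f 0) (f 1) (f 2) (hf.ne (by decide)) (hf.ne (by decide)) (hf.ne (by decide))
    rw [hP] at htri
    exact hrows ▸ htri.det_mem_nonZeroDivisors
  refine ⟨hdet (Fin.castSucc_injective 3), fun i ↦ ?_⟩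
  have hinj : Function.Injective (Function.update Fin.castSucc i (3 : Fin 4)) := by
    revert i
    decide
  have hupdate : updateRow (fun j : Fin 3 ↦ toVec (P j.castSucc)) i (toVec (P 3)) =
      fun j ↦ toVec (P (Function.update Fin.castSucc i 3 j)) :=
    (Function.comp_update (toVec ∘ P) Fin.castSucc i 3).symm
  exact hupdate ▸ hdet hinj

theorem exists_sameCls_actP_of_properQuad (hV : V⁰ ≤ IsUnit.submonoid V)
    (hP : ProperQuad (P 0) (P 1) (P 2) (P 3)) (hQ : ProperQuad (Q 0) (Q 1) (Q 2) (Q 3)) :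
    ∃ M : Matrix (Fin 3) (Fin 3) V, IsUnit M.det ∧ ∀ i, SameCls (actP M (P i)) (Q i) := by
  obtain ⟨M, hM, hrow, hlast⟩ := hP.isProjectiveFrame.exists_vecMul_eq hV hQ.isProjectiveFrame
  refine ⟨M, hM, fun i ↦ ?_⟩
  rw [sameCls_iff_exists_units_smul, toVec_actP]
  induction i using Fin.lastCases with
  | last => exact ⟨1, (one_smul _ _).trans hlast⟩
  | cast i => exact hrow i

theorem exists_eq_smul_one_of_properQuad (hP : ProperQuad (P 0) (P 1) (P 2) (P 3))
    (hM : ∀ i, SameCls (actP M (P i)) (P i)) : ∃ k : V, IsUnit k ∧ M = k • 1 := by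
  simp only [sameCls_iff_exists_units_smul, toVec_actP] at hM
  choose u hu using hM
  have hfix (i : Fin 4) : toVec (P i) ᵥ* M = (((u i)⁻¹ : Vˣ) : V) • toVec (P i) :=
    eq_inv_smul_iff.mpr (hu i)
  exact ⟨_, (u 3)⁻¹.isUnit, hP.isProjectiveFrame.eq_smul_one (fun i ↦ hfix i.castSucc) (hfix 3)⟩

end Geometry

theorem stmt12_general (V : Type) [CommRing V] (hV : V⁰ ≤ IsUnit.submonoid V)
    (P Q : Fin 4 → V × V × V)
    (hPq : ProperQuad (P 0) (P 1) (P 2) (P 3))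
    (hQq : ProperQuad (Q 0) (Q 1) (Q 2) (Q 3)) :
    (∃ M : Matrix (Fin 3) (Fin 3) V, IsUnit M.det ∧ ∀ i, SameCls (actP M (P i)) (Q i)) ∧
    (∀ M : Matrix (Fin 3) (Fin 3) V, (∀ i, SameCls (actP M (P i)) (P i)) →
      ∃ k : V, IsUnit k ∧ M = k • (1 : Matrix (Fin 3) (Fin 3) V)) :=
  ⟨exists_sameCls_actP_of_properQuad hV hPq hQq,
    fun _ ↦ exists_eq_smul_one_of_properQuad hPq⟩

/-- `GL₃(V)` acts transitively on proper ordered quadrangles, and any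
matrix with unit determinant fixing each point of some proper ordered quadrangle is a
scalar matrix `k·I` with `k` a unit. -/
theorem stmt12 (K : Type) [Field K] (V : Type) [CommRing V] [Algebra K V] (r s : V)
    (hV : GoodAlg K V r s)
    (P Q : Fin 4 → V × V × V)
    (hP : ∀ i, TrivAnn (P i)) (hQ : ∀ i, TrivAnn (Q i))
    (hPq : ProperQuad (P 0) (P 1) (P 2) (P 3))
    (hQq : ProperQuad (Q 0) (Q 1) (Q 2) (Q 3)) :
    (∃ M : Matrix (Fin 3) (Fin 3) V, IsUnit M.det ∧
      ∀ i : Fin 4, SameCls (actP M (P i)) (Q i)) ∧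
    (∀ M : Matrix (Fin 3) (Fin 3) V, IsUnit M.det →
      (∀ i : Fin 4, SameCls (actP M (P i)) (P i)) →
      ∃ k : V, IsUnit k ∧ M = k • (1 : Matrix (Fin 3) (Fin 3) V)) := by
  have : FiniteDimensional K V := Module.finite_of_finrank_eq_succ hV.1
  have hunit := IsArtinianRing.isUnit_submonoid_eq_of_isIntegral (R := K) (A := V)
  have h := stmt12_general V hunit.ge P Q hPq hQq
  exact ⟨h.1, fun M _ ↦ h.2 M⟩
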